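/- Let E : P_{μ₀}(ℝ^d) → ℝ ∪ {∞} be proper, coercive, lower semicontinuous, and λ-convex along generalized geodesics with λ ≥ 0, and assume E attains its minimum at μ̄. For τ > 0 set λ_τ := λ/(1+λτ). Then for every μ in the W₂-closure of D(E) there exists a geodesic (μ_α)_{α∈[0,1]} from μ̄ to μ such that for all α ∈ [0,1], E_τ(μ_α) ≤ (1−α) E_τ(μ̄) + α E_τ(μ) − α(1−α)(λ_τ/2) W₂²(μ̄, μ). -/

import Mathlib

/-!
The curve along which `E_τ` is convex is built from a proximal point `ν` of `μ`, i.e. a minimizer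
of `ρ ↦ W₂²(μ,ρ)/(2τ) + E(ρ)`. Apply generalized convexity with base point `μ` to the pair
`(μ̄, ν)`, obtaining a plan with coordinates `(x₁, x₂, x₃)` of laws `μ, μ̄, ν`. The law of
`(1-α)x₂ + αx₁` is a geodesic `μ_α` from `μ̄` to `μ`, and the law of `(1-α)x₂ + αx₃` is a
competitor in the infimum defining `E_τ(μ_α)`, at squared distance at most `α² W₂²(μ,ν)` from
`μ_α` (`IsGenPlan.W2_interp_le`). Since `E_τ(μ̄) = E(μ̄)`, because `μ̄` minimizes `E`, and
`E_τ(μ) = W₂²(μ,ν)/(2τ) + E(ν)`, this yields convexity with gain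
`α(1-α)/2 · (W₂²(μ,ν)/τ + λ ∫ |x₂-x₃|²)`, and the elementary inequality
`λ/(1+λτ) |x₁-x₂|² ≤ |x₁-x₃|²/τ + λ|x₂-x₃|²` (`IsGenPlan.interpolation_ineq`) finishes the proof.

The analytic input is the existence of the proximal point (`exists_proximal`). Convexity at the
midpoint of two near-minimizers makes consecutive terms of a minimizing sequence close in an
explicit coupling. Completeness of `W₂` is obtained by gluing these couplings into the law of a
Markov chain (`exists_chain`, by the Ionescu-Tulcea theorem), whose increments are summable in
`L²`; the law of its limit is the `W₂`-limit (`exists_W2_limit`), and lower semicontinuity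
concludes. The same gluing of two plans shows that finiteness of `W₂` is transitive.
-/

open MeasureTheory Filter ENNReal

noncomputable section

/-- Euclidean space `ℝ^d`. -/
abbrev Euc (d : ℕ) := EuclideanSpace ℝ (Fin d)

/-- The squared 2-Wasserstein distance, as an extended nonnegative real:
the infimum over couplings `γ` (Borel probability measures on `ℝ^d × ℝ^d`
with first marginal `μ` and second marginal `ν`) of `∫ |x-y|² dγ`. -/
noncomputable def W2sq {d : ℕ} (μ ν : Measure (Euc d)) : ℝ≥0∞ :=
  ⨅ (γ : Measure (Euc d × Euc d)) (_ : γ.map Prod.fst = μ ∧ γ.map Prod.snd = ν),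
    ∫⁻ q, ENNReal.ofReal (‖q.1 - q.2‖ ^ 2) ∂γ

/-- The 2-Wasserstein distance (a real number; degenerate when `W2sq = ∞`). -/
noncomputable def W2 {d : ℕ} (μ ν : Measure (Euc d)) : ℝ :=
  Real.sqrt (W2sq μ ν).toReal

/-- `γ` is an optimal transport plan from `μ` to `ν`. -/
def IsOptimalPlan {d : ℕ} (μ ν : Measure (Euc d)) (γ : Measure (Euc d × Euc d)) : Prop :=
  γ.map Prod.fst = μ ∧ γ.map Prod.snd = ν ∧
    ∫⁻ q, ENNReal.ofReal (‖q.1 - q.2‖ ^ 2) ∂γ = W2sq μ ν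

/-- `P_{μ₀}(ℝ^d)`: Borel probability measures at finite `W₂`-distance from `μ₀`. -/
def Pfin {d : ℕ} (μ₀ : Measure (Euc d)) : Set (Measure (Euc d)) :=
  {μ | IsProbabilityMeasure μ ∧ W2sq μ₀ μ ≠ ⊤}

/-- `E` is proper: its domain inside `P_{μ₀}` is nonempty (and `E` never takes the value `-∞`,
i.e. it maps into `ℝ ∪ {∞}`). -/
def ProperFn {d : ℕ} (μ₀ : Measure (Euc d)) (F : Measure (Euc d) → EReal) : Prop :=
  (∀ ρ, F ρ ≠ ⊥) ∧ ∃ ρ ∈ Pfin μ₀, F ρ ≠ ⊤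

/-- The domain `D(E)` of `E`. -/
def Dom {d : ℕ} (μ₀ : Measure (Euc d)) (F : Measure (Euc d) → EReal) : Set (Measure (Euc d)) :=
  {μ ∈ Pfin μ₀ | F μ ≠ ⊤}

/-- `E` is coercive: for some `τ₀ > 0`,
`inf_ν { W₂²(μ₀,ν)/(2τ₀) + E(ν) } > -∞`. -/
def CoerciveFn {d : ℕ} (μ₀ : Measure (Euc d)) (F : Measure (Euc d) → EReal) : Prop :=
  ∃ τ₀ : ℝ, 0 < τ₀ ∧
    ⊥ < ⨅ ν ∈ Pfin μ₀, (((W2 μ₀ ν) ^ 2 / (2 * τ₀) : ℝ) : EReal) + F ν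

/-- `E` is sequentially lower semicontinuous with respect to `W₂`-convergence. -/
def W2LSC {d : ℕ} (μ₀ : Measure (Euc d)) (F : Measure (Euc d) → EReal) : Prop :=
  ∀ (s : ℕ → Measure (Euc d)) (μ : Measure (Euc d)),
    (∀ n, s n ∈ Pfin μ₀) → μ ∈ Pfin μ₀ →
    Tendsto (fun n => W2 (s n) μ) atTop (nhds 0) →
    F μ ≤ liminf (fun n => F (s n)) atTop

/-- `E` is `λ`-convex along generalized geodesics: for all `μ₁, μ₂, μ₃ ∈ P_{μ₀}` there
is a 3-plan whose (1,2)- and (1,3)-marginals are optimal, along whose induced interpolating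
curve the `λ`-convexity inequality (with the full transport cost `∫|x₂-x₃|² d𝛍`) holds. -/
def GenGeoConvex {d : ℕ} (μ₀ : Measure (Euc d)) (lam : ℝ)
    (F : Measure (Euc d) → EReal) : Prop :=
  ∀ μ₁ ∈ Pfin μ₀, ∀ μ₂ ∈ Pfin μ₀, ∀ μ₃ ∈ Pfin μ₀,
    ∃ pl : Measure (Euc d × Euc d × Euc d),
      IsOptimalPlan μ₁ μ₂ (pl.map (fun q => (q.1, q.2.1))) ∧
      IsOptimalPlan μ₁ μ₃ (pl.map (fun q => (q.1, q.2.2))) ∧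
      ∀ α ∈ Set.Icc (0:ℝ) 1,
        F (pl.map (fun q => (1 - α) • q.2.1 + α • q.2.2)) ≤
          ((1 - α : ℝ) : EReal) * F μ₂ + (α : EReal) * F μ₃ -
            ((α * (1 - α) * (lam / 2) *
              (∫⁻ q, ENNReal.ofReal (‖q.2.1 - q.2.2‖ ^ 2) ∂pl).toReal : ℝ) : EReal)

/-- The `W₂`-closure (within `P_{μ₀}`) of a set of measures. -/
def W2Closure {d : ℕ} (μ₀ : Measure (Euc d)) (S : Set (Measure (Euc d))) :
    Set (Measure (Euc d)) :=
  {μ ∈ Pfin μ₀ | ∃ s : ℕ → Measure (Euc d), (∀ n, s n ∈ S) ∧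
    Tendsto (fun n => W2 (s n) μ) atTop (nhds 0)}

/-- The Moreau–Yosida regularization `E_τ`. -/
noncomputable def MY {d : ℕ} (μ₀ : Measure (Euc d)) (F : Measure (Euc d) → EReal)
    (τ : ℝ) (μ : Measure (Euc d)) : EReal :=
  ⨅ ν ∈ Pfin μ₀, (((W2 μ ν) ^ 2 / (2 * τ) : ℝ) : EReal) + F ν

/-- `ν` is a proximal point of `μ` for `E` with step `τ`: it minimizes
`ρ ↦ W₂²(μ,ρ)/(2τ) + E(ρ)` over `P_{μ₀}`. -/
def IsProximal {d : ℕ} (μ₀ : Measure (Euc d)) (F : Measure (Euc d) → EReal)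
    (τ : ℝ) (μ ν : Measure (Euc d)) : Prop :=
  ν ∈ Pfin μ₀ ∧ ∀ ρ ∈ Pfin μ₀,
    (((W2 μ ν) ^ 2 / (2 * τ) : ℝ) : EReal) + F ν ≤
      (((W2 μ ρ) ^ 2 / (2 * τ) : ℝ) : EReal) + F ρ

/-- The positive part of an extended real, as an element of `[0,∞]`. -/
noncomputable def ERealPos (x : EReal) : ℝ≥0∞ :=
  if x = ⊤ then ⊤ else ENNReal.ofReal x.toReal

/-- The filter of `W₂`-punctured neighborhoods of `μ` within `P_{μ₀}`. -/
def W2nhdsWithin {d : ℕ} (μ₀ μ : Measure (Euc d)) : Filter (Measure (Euc d)) :=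
  ⨅ ε ∈ Set.Ioi (0:ℝ), Filter.principal {ν | ν ∈ Pfin μ₀ ∧ ν ≠ μ ∧ W2 μ ν < ε}

/-- The metric slope `|∇_W F|(μ) = limsup_{ν → μ} (F(μ)-F(ν))⁺ / W₂(μ,ν)`,
valued in `[0,∞]`. -/
noncomputable def slopeW {d : ℕ} (μ₀ : Measure (Euc d)) (F : Measure (Euc d) → EReal)
    (μ : Measure (Euc d)) : ℝ≥0∞ :=
  Filter.limsup (fun ν => ERealPos (F μ - F ν) / ENNReal.ofReal (W2 μ ν))
    (W2nhdsWithin μ₀ μ)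

/-- `Λ_τ(μ,ν) = W₂²(μ,ν) + (τ²/2)|∇_W E|(μ)² + (τ²/2)|∇_W E|(ν)²`, valued in `[0,∞]`. -/
noncomputable def LamT {d : ℕ} (μ₀ : Measure (Euc d)) (F : Measure (Euc d) → EReal)
    (τ : ℝ) (μ ν : Measure (Euc d)) : ℝ≥0∞ :=
  W2sq μ ν + ENNReal.ofReal (τ ^ 2 / 2) * (slopeW μ₀ F μ) ^ 2
    + ENNReal.ofReal (τ ^ 2 / 2) * (slopeW μ₀ F ν) ^ 2

section

open ProbabilityTheory

/-! ### Gluing of couplings -/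

lemma map_compProd_comap {α β γ : Type*} [MeasurableSpace α] [MeasurableSpace β]
    [MeasurableSpace γ] (P : Measure α) [IsFiniteMeasure P] (κ : Kernel β γ) [IsMarkovKernel κ]
    {f : α → β} (hf : Measurable f) :
    (P ⊗ₘ κ.comap f hf).map (Prod.map f id) = P.map f ⊗ₘ κ := by
  ext s hs
  rw [Measure.map_apply (hf.prodMap measurable_id) hs,
    Measure.compProd_apply (hf.prodMap measurable_id hs), Measure.compProd_apply hs,
    lintegral_map (Kernel.measurable_kernel_prodMk_left hs) hf]
  rfl

/-- Two couplings with a common middle marginal are the consecutive-pair marginals of a measure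
on triples, obtained by disintegrating the second one. -/
lemma exists_glue {α : Type*} [MeasurableSpace α] [StandardBorelSpace α] [Nonempty α]
    (γ γ' : Measure (α × α)) [IsProbabilityMeasure γ] [IsProbabilityMeasure γ']
    (h : γ.map Prod.snd = γ'.map Prod.fst) :
    ∃ R : Measure ((α × α) × α), IsProbabilityMeasure R ∧ R.map Prod.fst = γ ∧
      R.map (fun q => (q.1.2, q.2)) = γ' := by
  refine ⟨γ ⊗ₘ γ'.condKernel.comap Prod.snd measurable_snd, inferInstance,
    Measure.fst_compProd _ _, ?_⟩
  have h1 := map_compProd_comap γ γ'.condKernel measurable_snd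
  have h2 := γ'.disintegrate γ'.condKernel
  rw [Measure.fst, ← h, ← h1] at h2
  exact h2

/-- A sequence of couplings of consecutive measures is realized by a single process `(X_n)`: the
Markov chain whose transition kernels are the disintegrations of the couplings. -/
lemma exists_chain {α : Type*} [MeasurableSpace α] [StandardBorelSpace α] [Nonempty α]
    (ρ : ℕ → Measure α) (γ : ℕ → Measure (α × α)) [∀ n, IsProbabilityMeasure (ρ n)]
    [∀ n, IsProbabilityMeasure (γ n)]
    (h1 : ∀ n, (γ n).map Prod.fst = ρ n) (h2 : ∀ n, (γ n).map Prod.snd = ρ (n + 1)) :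
    ∃ P : Measure (ℕ → α), IsProbabilityMeasure P ∧
      ∀ n, P.map (fun x => (x n, x (n + 1))) = γ n := by
  let κ : (n : ℕ) → Kernel (Π _ : Finset.Iic n, α) α := fun n =>
    (γ n).condKernel.comap (fun x => x ⟨n, by simp⟩) (measurable_pi_apply _)
  have : ∀ n, IsMarkovKernel (κ n) := fun n => by dsimp only [κ]; infer_instance
  let P : Measure (ℕ → α) := Kernel.trajMeasure (X := fun _ => α) (ρ 0) κ
  have hP : IsProbabilityMeasure P := by dsimp only [P]; infer_instance
  refine ⟨P, hP, ?_⟩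
  have hstep : ∀ n, P.map (fun x => x n) = ρ n → P.map (fun x => (x n, x (n + 1))) = γ n := by
    intro n hn
    have h3 := Kernel.map_frestrictLe_trajMeasure_compProd_eq_map_trajMeasure
      (X := fun _ => α) (μ₀ := ρ 0) (κ := κ) (a := n)
    have : IsProbabilityMeasure (P.map (Preorder.frestrictLe (π := fun _ => α) n)) :=
      Measure.isProbabilityMeasure_map (by fun_prop)
    have h4 := map_compProd_comap (P.map (Preorder.frestrictLe (π := fun _ => α) n))
      (γ n).condKernel (f := fun x => x ⟨n, by simp⟩) (measurable_pi_apply _)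
    rw [Measure.map_map (measurable_pi_apply _) (by fun_prop)] at h4
    have h5 : (fun x : (Π _ : Finset.Iic n, α) => x ⟨n, by simp⟩) ∘
      (Preorder.frestrictLe (π := fun _ => α) n) = fun x => x n := rfl
    rw [h5, hn, ← h1 n] at h4
    have h6 := (γ n).disintegrate (γ n).condKernel
    rw [Measure.fst, ← h4] at h6
    rw [← h6]
    change _ = (P.map (Preorder.frestrictLe (π := fun _ => α) n) ⊗ₘ κ n).map _
    rw [h3, Measure.map_map (by fun_prop) (by fun_prop)]
    rfl
  have hmarg : ∀ n, P.map (fun x => x n) = ρ n := by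
    intro n
    induction n with
    | zero =>
      have h7 : P.map (Preorder.frestrictLe (π := fun _ => α) 0)
          = (ρ 0).map (MeasurableEquiv.piUnique (fun _ : Finset.Iic 0 => α)).symm := by
        dsimp only [P, Kernel.trajMeasure]
        rw [Measure.map_comp _ _ (by fun_prop), Kernel.traj_map_frestrictLe,
          Kernel.partialTraj_self, Measure.id_comp]
      have h8 := congrArg (Measure.map (fun x : (Π _ : Finset.Iic 0, α) => x ⟨0, by simp⟩)) h7
      rw [Measure.map_map (by fun_prop) (by fun_prop),
        Measure.map_map (by fun_prop) (by fun_prop)] at h8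
      refine h8.trans ?_
      have h9 : (fun x : (Π _ : Finset.Iic 0, α) => x ⟨0, by simp⟩) ∘
          (MeasurableEquiv.piUnique (fun _ : Finset.Iic 0 => α)).symm = id := by
        funext y
        exact (MeasurableEquiv.piUnique (fun _ : Finset.Iic 0 => α)).apply_symm_apply y
      rw [h9, Measure.map_id]
    | succ n ih =>
      rw [← h2 n, ← hstep n ih, Measure.map_map (by fun_prop) (by fun_prop)]
      rfl
  exact fun n => hstep n (hmarg n)

/-! ### Basic properties of the Wasserstein distance -/

variable {d : ℕ}

lemma lintegral_sq_norm {Ω : Type*} [MeasurableSpace Ω] (P : Measure Ω) (f : Ω → Euc d) :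
    ∫⁻ ω, ENNReal.ofReal (‖f ω‖ ^ 2) ∂P = eLpNorm f 2 P ^ 2 := by
  have h := eLpNorm_nnreal_pow_eq_lintegral (μ := P) (f := f) (p := 2) two_ne_zero
  simp only [NNReal.coe_ofNat, ENNReal.rpow_ofNat, ENNReal.coe_ofNat] at h
  rw [h]
  refine lintegral_congr fun ω => ?_
  rw [ENNReal.ofReal_pow (norm_nonneg _), ofReal_norm]

lemma lintegral_sq_norm_ne_top_iff {Ω : Type*} [MeasurableSpace Ω] (P : Measure Ω)
    {f : Ω → Euc d} (hf : Measurable f) :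
    ∫⁻ ω, ENNReal.ofReal (‖f ω‖ ^ 2) ∂P ≠ ⊤ ↔ MemLp f 2 P := by
  rw [lintegral_sq_norm, Ne, ENNReal.pow_eq_top_iff]
  simp [MemLp, hf.aestronglyMeasurable, lt_top_iff_ne_top]

lemma toReal_lintegral_sq_norm {Ω : Type*} [MeasurableSpace Ω] (P : Measure Ω)
    {f : Ω → Euc d} (hf : Measurable f) :
    (∫⁻ ω, ENNReal.ofReal (‖f ω‖ ^ 2) ∂P).toReal = ∫ ω, ‖f ω‖ ^ 2 ∂P := by
  rw [integral_eq_lintegral_of_nonneg_ae (ae_of_all _ fun ω => by positivity) (by fun_prop)]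

lemma W2_nonneg (μ ν : Measure (Euc d)) : 0 ≤ W2 μ ν := Real.sqrt_nonneg _

lemma W2_sq (μ ν : Measure (Euc d)) : W2 μ ν ^ 2 = (W2sq μ ν).toReal :=
  Real.sq_sqrt ENNReal.toReal_nonneg

lemma W2sq_map_le {Ω : Type*} [MeasurableSpace Ω] (P : Measure Ω) {X Y : Ω → Euc d}
    (hX : Measurable X) (hY : Measurable Y) :
    W2sq (P.map X) (P.map Y) ≤ ∫⁻ ω, ENNReal.ofReal (‖X ω - Y ω‖ ^ 2) ∂P := by
  refine (iInf₂_le (P.map fun ω => (X ω, Y ω)) ?h).trans_eq ?_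
  · constructor
    · rw [Measure.map_map (by fun_prop) (by fun_prop)]; rfl
    · rw [Measure.map_map (by fun_prop) (by fun_prop)]; rfl
  · rw [lintegral_map (by fun_prop) (by fun_prop)]

lemma W2sq_map_ne_top {Ω : Type*} [MeasurableSpace Ω] {P : Measure Ω} {X Y : Ω → Euc d}
    (hX : Measurable X) (hY : Measurable Y) (h : MemLp (fun ω => X ω - Y ω) 2 P) :
    W2sq (P.map X) (P.map Y) ≠ ⊤ :=
  ne_top_of_le_ne_top ((lintegral_sq_norm_ne_top_iff P (hX.sub hY)).2 h) (W2sq_map_le P hX hY)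

lemma W2_map_sq_le {Ω : Type*} [MeasurableSpace Ω] {P : Measure Ω} {X Y : Ω → Euc d}
    (hX : Measurable X) (hY : Measurable Y) (h : MemLp (fun ω => X ω - Y ω) 2 P) :
    W2 (P.map X) (P.map Y) ^ 2 ≤ ∫ ω, ‖X ω - Y ω‖ ^ 2 ∂P := by
  have hXY : Measurable fun ω => X ω - Y ω := hX.sub hY
  rw [W2_sq, ← toReal_lintegral_sq_norm P hXY]
  exact ENNReal.toReal_mono ((lintegral_sq_norm_ne_top_iff P (hX.sub hY)).2 h)
    (W2sq_map_le P hX hY)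

lemma toReal_eLpNorm_sq {Ω : Type*} [MeasurableSpace Ω] (P : Measure Ω) {f : Ω → Euc d}
    (hf : Measurable f) : (eLpNorm f 2 P).toReal ^ 2 = ∫ ω, ‖f ω‖ ^ 2 ∂P := by
  rw [← toReal_lintegral_sq_norm P hf, lintegral_sq_norm, ENNReal.toReal_pow]

lemma W2_map_le {Ω : Type*} [MeasurableSpace Ω] {P : Measure Ω} {X Y : Ω → Euc d}
    (hX : Measurable X) (hY : Measurable Y) (h : MemLp (fun ω => X ω - Y ω) 2 P) :
    W2 (P.map X) (P.map Y) ≤ (eLpNorm (fun ω => X ω - Y ω) 2 P).toReal := by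
  have hXY : Measurable fun ω => X ω - Y ω := hX.sub hY
  rw [← pow_le_pow_iff_left₀ (W2_nonneg _ _) ENNReal.toReal_nonneg two_ne_zero,
    toReal_eLpNorm_sq P hXY]
  exact W2_map_sq_le hX hY h

lemma W2sq_comm_le (μ ν : Measure (Euc d)) : W2sq μ ν ≤ W2sq ν μ := by
  refine le_iInf₂ fun γ hγ => ?_
  rw [← hγ.1, ← hγ.2]
  refine (W2sq_map_le γ measurable_snd measurable_fst).trans_eq ?_
  exact lintegral_congr fun q => by rw [norm_sub_rev]

lemma W2sq_comm (μ ν : Measure (Euc d)) : W2sq μ ν = W2sq ν μ :=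
  le_antisymm (W2sq_comm_le _ _) (W2sq_comm_le _ _)

lemma W2_comm (μ ν : Measure (Euc d)) : W2 μ ν = W2 ν μ := by
  rw [W2, W2sq_comm, ← W2]

lemma W2sq_self (μ : Measure (Euc d)) : W2sq μ μ = 0 := by
  have h := W2sq_map_le μ (X := id) (Y := id) measurable_id measurable_id
  simpa using h

lemma W2_self (μ : Measure (Euc d)) : W2 μ μ = 0 := by simp [W2, W2sq_self]

lemma exists_coupling {μ ν : Measure (Euc d)} (h : W2sq μ ν ≠ ⊤) :
    ∃ γ : Measure (Euc d × Euc d), γ.map Prod.fst = μ ∧ γ.map Prod.snd = ν ∧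
      MemLp (fun q : Euc d × Euc d => q.1 - q.2) 2 γ := by
  have h' : W2sq μ ν < ⊤ := h.lt_top
  simp only [W2sq, iInf_lt_iff] at h'
  obtain ⟨γ, hγ, hlt⟩ := h'
  exact ⟨γ, hγ.1, hγ.2,
    (lintegral_sq_norm_ne_top_iff γ (measurable_fst.sub measurable_snd)).1 hlt.ne⟩

lemma isProbabilityMeasure_of_map {Ω β : Type*} [MeasurableSpace Ω] [MeasurableSpace β]
    {P : Measure Ω} (f : Ω → β) {μ : Measure β} (hμ : IsProbabilityMeasure μ)
    (h : P.map f = μ) : IsProbabilityMeasure P := by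
  subst h
  exact Measure.isProbabilityMeasure_of_map f

/-- Finiteness of the transport cost is transitive, by gluing two couplings of finite cost. -/
lemma W2sq_trans_ne_top {μ ν ρ : Measure (Euc d)} (hν : IsProbabilityMeasure ν)
    (h : W2sq μ ν ≠ ⊤) (h' : W2sq ν ρ ≠ ⊤) : W2sq μ ρ ≠ ⊤ := by
  obtain ⟨γ, h1, h2, h3⟩ := exists_coupling h
  obtain ⟨γ', h1', h2', h3'⟩ := exists_coupling h'
  have := isProbabilityMeasure_of_map Prod.snd hν h2
  have := isProbabilityMeasure_of_map Prod.fst hν h1'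
  obtain ⟨R, hR, hR1, hR2⟩ := exists_glue γ γ' (h2.trans h1'.symm)
  have e1 : R.map (fun q => q.1.1) = μ := by
    rw [← h1, ← hR1, Measure.map_map (by fun_prop) (by fun_prop)]; rfl
  have e2 : R.map (fun q => q.2) = ρ := by
    rw [← h2', ← hR2, Measure.map_map (by fun_prop) (by fun_prop)]; rfl
  rw [← hR1] at h3
  rw [← hR2] at h3'
  have m1 := h3.comp_of_map (by fun_prop)
  have m2 := h3'.comp_of_map (by fun_prop)
  rw [← e1, ← e2]
  refine W2sq_map_ne_top (by fun_prop) (by fun_prop) ?_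
  exact (m1.add m2).ae_eq (ae_of_all _ fun q => by simp)

lemma self_mem_Pfin {μ₀ : Measure (Euc d)} (hμ₀ : IsProbabilityMeasure μ₀) : μ₀ ∈ Pfin μ₀ :=
  ⟨hμ₀, by simp [W2sq_self]⟩

lemma W2sq_ne_top_of_mem {μ₀ μ ν : Measure (Euc d)} (hμ₀ : IsProbabilityMeasure μ₀)
    (hμ : μ ∈ Pfin μ₀) (hν : ν ∈ Pfin μ₀) : W2sq μ ν ≠ ⊤ :=
  W2sq_trans_ne_top hμ₀ (by rw [W2sq_comm]; exact hμ.2) hν.2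

lemma mem_Pfin_of_W2sq_ne_top {μ₀ μ ν : Measure (Euc d)} (hμ : μ ∈ Pfin μ₀)
    (hν : IsProbabilityMeasure ν) (h : W2sq μ ν ≠ ⊤) : ν ∈ Pfin μ₀ :=
  ⟨hν, W2sq_trans_ne_top hμ.1 hμ.2 h⟩

/-! ### Completeness -/

/-- Completeness of `W₂` for fast Cauchy sequences, with the Cauchy property expressed through
given couplings. The coordinates `X_n` of the associated chain have finite second moment only
relative to each other, so the limit is taken for `X_n - X_0` in `L²`. -/
theorem exists_W2_limit (ν : ℕ → Measure (Euc d)) (γ : ℕ → Measure (Euc d × Euc d))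
    (hν : ∀ n, IsProbabilityMeasure (ν n))
    (h1 : ∀ n, (γ n).map Prod.fst = ν n) (h2 : ∀ n, (γ n).map Prod.snd = ν (n + 1))
    (hγ : ∀ n, eLpNorm (fun q : Euc d × Euc d => q.1 - q.2) 2 (γ n) ≤ 2⁻¹ ^ n) :
    ∃ ρ : Measure (Euc d), IsProbabilityMeasure ρ ∧ (∀ n, W2sq (ν n) ρ ≠ ⊤) ∧
      Tendsto (fun n => W2 (ν n) ρ) atTop (nhds 0) := by
  have hγp : ∀ n, IsProbabilityMeasure (γ n) := fun n =>
    isProbabilityMeasure_of_map Prod.fst (hν n) (h1 n)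
  obtain ⟨P, hP, hPγ⟩ := exists_chain ν γ h1 h2
  have hlaw : ∀ n, P.map (fun x => x n) = ν n := by
    intro n
    rw [← h1 n, ← hPγ n, Measure.map_map (by fun_prop) (by fun_prop)]; rfl
  have hstep : ∀ n, eLpNorm (fun x : ℕ → Euc d => x n - x (n + 1)) 2 P ≤ 2⁻¹ ^ n := by
    intro n
    have := hγ n
    rw [← hPγ n, eLpNorm_map_measure (by fun_prop) (by fun_prop)] at this
    exact this
  have hmem : ∀ n, MemLp (fun x : ℕ → Euc d => x n - x (n + 1)) 2 P := fun n =>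
    ⟨by fun_prop, (hstep n).trans_lt (by finiteness)⟩
  have hY : ∀ n, MemLp (fun x : ℕ → Euc d => x n - x 0) 2 P := by
    intro n
    induction n with
    | zero => simp
    | succ n ih =>
      exact (ih.sub (hmem n)).ae_eq (ae_of_all _ fun x => by simp)
  have hcau : CauchySeq (fun n => (hY n).toLp) := by
    refine cauchySeq_of_edist_le_geometric 2⁻¹ 1 (by norm_num) (by norm_num) fun n => ?_
    rw [Lp.edist_toLp_toLp, one_mul]
    refine le_of_eq_of_le ?_ (hstep n)
    congr 1
    funext x
    simp
  obtain ⟨g, hg⟩ := cauchySeq_tendsto_of_complete hcau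
  have hgm : Measurable (g : (ℕ → Euc d) → Euc d) := (Lp.stronglyMeasurable g).measurable
  have hdist : ∀ n, eLpNorm (fun x : ℕ → Euc d => x n - (x 0 + g x)) 2 P
      = edist (hY n).toLp g := by
    intro n
    rw [Lp.edist_def]
    refine eLpNorm_congr_ae ?_
    filter_upwards [(hY n).coeFn_toLp] with x hx
    simp only [Pi.sub_apply, hx]
    abel
  have hmemZ : ∀ n, MemLp (fun x : ℕ → Euc d => x n - (x 0 + g x)) 2 P := fun n =>
    ⟨by fun_prop, by rw [hdist]; exact edist_lt_top _ _⟩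
  refine ⟨P.map (fun x => x 0 + g x), Measure.isProbabilityMeasure_map (by fun_prop),
    fun n => ?_, ?_⟩
  · rw [← hlaw n]
    exact W2sq_map_ne_top (by fun_prop) (by fun_prop) (hmemZ n)
  · refine squeeze_zero (fun n => W2_nonneg _ _) (fun n => ?_) (tendsto_iff_dist_tendsto_zero.1 hg)
    rw [← hlaw n, dist_edist, ← hdist]
    exact W2_map_le (by fun_prop) (by fun_prop) (hmemZ n)

/-! ### Plans with two optimal marginals -/

/-- `P` is the law of a triple `(x₁, x₂, x₃)` with marginals `μ₁, μ₂, μ₃` such that `(x₁, x₂)` and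
`(x₁, x₃)` are optimal couplings of finite cost; optimality is recorded by the equality of the
cost with the squared Wasserstein distance. -/
structure IsGenPlan (μ₁ μ₂ μ₃ : Measure (Euc d)) (P : Measure (Euc d × Euc d × Euc d)) :
    Prop where
  prob : IsProbabilityMeasure P
  law₁ : P.map (fun q => q.1) = μ₁
  law₂ : P.map (fun q => q.2.1) = μ₂
  law₃ : P.map (fun q => q.2.2) = μ₃
  memLp₁₂ : MemLp (fun q : Euc d × Euc d × Euc d => q.1 - q.2.1) 2 P
  memLp₁₃ : MemLp (fun q : Euc d × Euc d × Euc d => q.1 - q.2.2) 2 P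
  cost₁₂ : ∫ q, ‖q.1 - q.2.1‖ ^ 2 ∂P = W2 μ₁ μ₂ ^ 2
  cost₁₃ : ∫ q, ‖q.1 - q.2.2‖ ^ 2 ∂P = W2 μ₁ μ₃ ^ 2

lemma exists_isGenPlan {μ₀ : Measure (Euc d)} (hμ₀ : IsProbabilityMeasure μ₀)
    {F : Measure (Euc d) → EReal} {lam : ℝ} (hconv : GenGeoConvex μ₀ lam F)
    {μ₁ μ₂ μ₃ : Measure (Euc d)} (h₁ : μ₁ ∈ Pfin μ₀) (h₂ : μ₂ ∈ Pfin μ₀) (h₃ : μ₃ ∈ Pfin μ₀) :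
    ∃ P : Measure (Euc d × Euc d × Euc d), IsGenPlan μ₁ μ₂ μ₃ P ∧
      ∀ α ∈ Set.Icc (0:ℝ) 1,
        F (P.map (fun q => (1 - α) • q.2.1 + α • q.2.2)) ≤
          ((1 - α : ℝ) : EReal) * F μ₂ + (α : EReal) * F μ₃ -
            ((α * (1 - α) * (lam / 2) * ∫ q, ‖q.2.1 - q.2.2‖ ^ 2 ∂P : ℝ) : EReal) := by
  obtain ⟨P, ⟨a1, a2, a3⟩, ⟨b1, b2, b3⟩, hc⟩ := hconv μ₁ h₁ μ₂ h₂ μ₃ h₃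
  rw [Measure.map_map (by fun_prop) (by fun_prop)] at a1 a2 b1 b2
  rw [lintegral_map (by fun_prop) (by fun_prop)] at a3 b3
  have m12 : Measurable fun q : Euc d × Euc d × Euc d => q.1 - q.2.1 := by fun_prop
  have m13 : Measurable fun q : Euc d × Euc d × Euc d => q.1 - q.2.2 := by fun_prop
  have m23 : Measurable fun q : Euc d × Euc d × Euc d => q.2.1 - q.2.2 := by fun_prop
  refine ⟨P, ⟨isProbabilityMeasure_of_map _ h₁.1 a1, a1, a2, b2, ?_, ?_, ?_, ?_⟩, ?_⟩
  · rw [← lintegral_sq_norm_ne_top_iff P m12, a3]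
    exact W2sq_ne_top_of_mem hμ₀ h₁ h₂
  · rw [← lintegral_sq_norm_ne_top_iff P m13, b3]
    exact W2sq_ne_top_of_mem hμ₀ h₁ h₃
  · rw [W2_sq, ← a3, toReal_lintegral_sq_norm P m12]
  · rw [W2_sq, ← b3, toReal_lintegral_sq_norm P m13]
  · intro α hα
    rw [← toReal_lintegral_sq_norm P m23]
    exact hc α hα

lemma IsGenPlan.memLp₂₃ {μ₁ μ₂ μ₃ : Measure (Euc d)} {P : Measure (Euc d × Euc d × Euc d)}
    (h : IsGenPlan μ₁ μ₂ μ₃ P) :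
    MemLp (fun q : Euc d × Euc d × Euc d => q.2.1 - q.2.2) 2 P :=
  (h.memLp₁₃.sub h.memLp₁₂).ae_eq (ae_of_all _ fun q => by simp)

lemma IsGenPlan.memLp_interp {μ₁ μ₂ μ₃ : Measure (Euc d)}
    {P : Measure (Euc d × Euc d × Euc d)} (h : IsGenPlan μ₁ μ₂ μ₃ P) (α : ℝ) :
    MemLp (fun q : Euc d × Euc d × Euc d => q.1 - ((1 - α) • q.2.1 + α • q.2.2)) 2 P := by
  refine ((h.memLp₁₂.const_smul (1 - α)).add (h.memLp₁₃.const_smul α)).ae_eq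
    (ae_of_all _ fun q => ?_)
  simp only [Pi.add_apply, Pi.smul_apply]
  module

lemma IsGenPlan.interp_mem_Pfin {μ₀ μ₁ μ₂ μ₃ : Measure (Euc d)}
    {P : Measure (Euc d × Euc d × Euc d)} (h : IsGenPlan μ₁ μ₂ μ₃ P) (h₁ : μ₁ ∈ Pfin μ₀)
    (α : ℝ) : P.map (fun q => (1 - α) • q.2.1 + α • q.2.2) ∈ Pfin μ₀ := by
  have := h.prob
  refine mem_Pfin_of_W2sq_ne_top h₁ (Measure.isProbabilityMeasure_map (by fun_prop)) ?_
  rw [← h.law₁]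
  exact W2sq_map_ne_top (by fun_prop) (by fun_prop) (h.memLp_interp α)

lemma MeasureTheory.MemLp.integrable_sq_norm {Ω : Type*} [MeasurableSpace Ω]
    {P : Measure Ω} {f : Ω → Euc d} (hf : MemLp f 2 P) : Integrable (fun ω => ‖f ω‖ ^ 2) P :=
  (memLp_two_iff_integrable_sq_norm hf.1).1 hf

/-- Distance from the base point to the generalized midpoint, by the parallelogram identity. -/
lemma IsGenPlan.W2_midpoint_le {μ₁ μ₂ μ₃ : Measure (Euc d)}
    {P : Measure (Euc d × Euc d × Euc d)} (h : IsGenPlan μ₁ μ₂ μ₃ P) :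
    W2 μ₁ (P.map (fun q => (1 - 1 / 2 : ℝ) • q.2.1 + (1 / 2 : ℝ) • q.2.2)) ^ 2 ≤
      1 / 2 * W2 μ₁ μ₂ ^ 2 + 1 / 2 * W2 μ₁ μ₃ ^ 2 - 1 / 4 * ∫ q, ‖q.2.1 - q.2.2‖ ^ 2 ∂P := by
  have h0 := W2_map_sq_le (by fun_prop) (by fun_prop) (h.memLp_interp (1 / 2))
  rw [h.law₁] at h0
  refine h0.trans_eq ?_
  rw [← h.cost₁₂, ← h.cost₁₃, ← integral_const_mul, ← integral_const_mul, ← integral_const_mul,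
    ← integral_add (h.memLp₁₂.integrable_sq_norm.const_mul _)
      (h.memLp₁₃.integrable_sq_norm.const_mul _),
    ← integral_sub (((h.memLp₁₂.integrable_sq_norm.const_mul _).add
      (h.memLp₁₃.integrable_sq_norm.const_mul _) :) : Integrable (fun q => _ + _) P)
      (h.memLp₂₃.integrable_sq_norm.const_mul _)]
  refine integral_congr_ae (ae_of_all _ fun q => ?_)
  have e1 : q.1 - ((1 - 1 / 2 : ℝ) • q.2.1 + (1 / 2 : ℝ) • q.2.2)
      = (1 / 2 : ℝ) • ((q.1 - q.2.1) + (q.1 - q.2.2)) := by module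
  have e2 : q.2.1 - q.2.2 = (q.1 - q.2.2) - (q.1 - q.2.1) := by module
  have e3 := parallelogram_law_with_norm ℝ (q.1 - q.2.2) (q.1 - q.2.1)
  rw [← e2, add_comm (q.1 - q.2.2)] at e3
  simp only [e1, norm_smul, mul_pow]
  norm_num
  linarith

/-- The triangle inequality, for which a plan based at the intermediate measure `μ₁` provides the
optimal couplings already glued together. -/
lemma W2_triangle {μ₀ : Measure (Euc d)} (hμ₀ : IsProbabilityMeasure μ₀)
    {F : Measure (Euc d) → EReal} {lam : ℝ} (hconv : GenGeoConvex μ₀ lam F)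
    {μ₁ μ₂ μ₃ : Measure (Euc d)} (h₁ : μ₁ ∈ Pfin μ₀) (h₂ : μ₂ ∈ Pfin μ₀) (h₃ : μ₃ ∈ Pfin μ₀) :
    W2 μ₂ μ₃ ≤ W2 μ₁ μ₂ + W2 μ₁ μ₃ := by
  obtain ⟨P, h, -⟩ := exists_isGenPlan hμ₀ hconv h₁ h₂ h₃
  have e2 : (eLpNorm (fun q : Euc d × Euc d × Euc d => q.1 - q.2.1) 2 P).toReal = W2 μ₁ μ₂ := by
    rw [← pow_left_inj₀ ENNReal.toReal_nonneg (W2_nonneg _ _) two_ne_zero,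
      toReal_eLpNorm_sq P (by fun_prop), h.cost₁₂]
  have e3 : (eLpNorm (fun q : Euc d × Euc d × Euc d => q.1 - q.2.2) 2 P).toReal = W2 μ₁ μ₃ := by
    rw [← pow_left_inj₀ ENNReal.toReal_nonneg (W2_nonneg _ _) two_ne_zero,
      toReal_eLpNorm_sq P (by fun_prop), h.cost₁₃]
  have h0 := W2_map_le (by fun_prop) (by fun_prop) h.memLp₂₃
  rw [h.law₂, h.law₃] at h0
  refine h0.trans ?_
  rw [← e2, ← e3, add_comm, ← ENNReal.toReal_add h.memLp₁₃.2.ne h.memLp₁₂.2.ne]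
  refine ENNReal.toReal_mono (ENNReal.add_ne_top.2 ⟨h.memLp₁₃.2.ne, h.memLp₁₂.2.ne⟩) ?_
  refine le_of_eq_of_le ?_ (eLpNorm_sub_le h.memLp₁₃.1 h.memLp₁₂.1 one_le_two)
  congr 1
  funext q
  simp

/-- The two curves leaving `μ₂` towards `μ₁` and `μ₃` move apart at most linearly. -/
lemma IsGenPlan.W2_interp_le {μ₁ μ₂ μ₃ : Measure (Euc d)}
    {P : Measure (Euc d × Euc d × Euc d)} (h : IsGenPlan μ₁ μ₂ μ₃ P) (α : ℝ) :
    W2 (P.map (fun q => (1 - α) • q.2.1 + α • q.1))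
      (P.map (fun q => (1 - α) • q.2.1 + α • q.2.2)) ^ 2 ≤ α ^ 2 * W2 μ₁ μ₃ ^ 2 := by
  have e : (fun q : Euc d × Euc d × Euc d => ((1 - α) • q.2.1 + α • q.1)
      - ((1 - α) • q.2.1 + α • q.2.2)) = fun q => α • (q.1 - q.2.2) := by
    funext q
    module
  have h0 := W2_map_sq_le (P := P)
    (X := fun q : Euc d × Euc d × Euc d => (1 - α) • q.2.1 + α • q.1)
    (Y := fun q : Euc d × Euc d × Euc d => (1 - α) • q.2.1 + α • q.2.2)
    (by fun_prop) (by fun_prop) (by rw [e]; exact h.memLp₁₃.const_smul α)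
  refine h0.trans_eq ?_
  rw [← h.cost₁₃, ← integral_const_mul]
  refine integral_congr_ae (ae_of_all _ fun q => ?_)
  have := congrFun e q
  beta_reduce at this ⊢
  simp only [this, norm_smul, mul_pow, Real.norm_eq_abs, sq_abs]

/-- Integrated form of `λ/(1+λτ) (a+b)² ≤ a²/τ + λb²`, where `a = |x₁-x₃|` and `b = |x₂-x₃|`. -/
lemma IsGenPlan.interpolation_ineq {μ₁ μ₂ μ₃ : Measure (Euc d)}
    {P : Measure (Euc d × Euc d × Euc d)} (h : IsGenPlan μ₁ μ₂ μ₃ P) {lam τ : ℝ}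
    (hlam : 0 ≤ lam) (hτ : 0 < τ) :
    lam / (1 + lam * τ) * W2 μ₁ μ₂ ^ 2 ≤
      1 / τ * W2 μ₁ μ₃ ^ 2 + lam * ∫ q, ‖q.2.1 - q.2.2‖ ^ 2 ∂P := by
  rw [← h.cost₁₂, ← h.cost₁₃, ← integral_const_mul, ← integral_const_mul, ← integral_const_mul,
    ← integral_add (h.memLp₁₃.integrable_sq_norm.const_mul _)
      (h.memLp₂₃.integrable_sq_norm.const_mul _)]
  refine integral_mono (h.memLp₁₂.integrable_sq_norm.const_mul _)
    ((h.memLp₁₃.integrable_sq_norm.const_mul _).add (h.memLp₂₃.integrable_sq_norm.const_mul _))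
    fun q => ?_
  have hc : ‖q.1 - q.2.1‖ ≤ ‖q.1 - q.2.2‖ + ‖q.2.1 - q.2.2‖ := by
    rw [norm_sub_rev q.2.1]
    exact norm_sub_le_norm_sub_add_norm_sub _ _ _
  have hk : 0 ≤ lam * τ := by positivity
  set a := ‖q.1 - q.2.2‖
  set b := ‖q.2.1 - q.2.2‖
  have hc2 : ‖q.1 - q.2.1‖ ^ 2 ≤ (a + b) ^ 2 := by gcongr
  have e : 1 / τ * a ^ 2 + lam * b ^ 2 - lam / (1 + lam * τ) * (a + b) ^ 2
      = (a - lam * τ * b) ^ 2 / (τ * (1 + lam * τ)) := by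
    field_simp
    ring
  have e' : 0 ≤ (a - lam * τ * b) ^ 2 / (τ * (1 + lam * τ)) := by positivity
  have : lam / (1 + lam * τ) * ‖q.1 - q.2.1‖ ^ 2 ≤ lam / (1 + lam * τ) * (a + b) ^ 2 := by gcongr
  simp only
  linarith

/-! ### Proximal points -/

/-- The infimum defining the Moreau–Yosida regularization is finite and attained, when `F` is
bounded below by its minimum `m`. -/
theorem exists_proximal {μ₀ : Measure (Euc d)} (hμ₀ : IsProbabilityMeasure μ₀)
    {F : Measure (Euc d) → EReal} {lam : ℝ} (hlam : 0 ≤ lam) (hlsc : W2LSC μ₀ F)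
    (hconv : GenGeoConvex μ₀ lam F) {m : ℝ} (hm : ∀ ρ ∈ Pfin μ₀, (m : EReal) ≤ F ρ)
    {μbar : Measure (Euc d)} (hμbar : μbar ∈ Pfin μ₀) (hFm : F μbar = m)
    {τ : ℝ} (hτ : 0 < τ) {μ : Measure (Euc d)} (hμ : μ ∈ Pfin μ₀) :
    ∃ ν ∈ Pfin μ₀, ∃ f : ℝ, F ν = f ∧ MY μ₀ F τ μ = ((W2 μ ν ^ 2 / (2 * τ) + f : ℝ) : EReal) := by
  obtain ⟨I, hI⟩ : ∃ I : ℝ, MY μ₀ F τ μ = I := by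
    have hlow : (m : EReal) ≤ MY μ₀ F τ μ := by
      refine le_iInf₂ fun ρ hρ => ?_
      rw [← zero_add (m : EReal)]
      refine add_le_add ?_ (hm ρ hρ)
      exact_mod_cast (by positivity : 0 ≤ W2 μ ρ ^ 2 / (2 * τ))
    have hup : MY μ₀ F τ μ ≤ ((W2 μ μbar ^ 2 / (2 * τ) + m : ℝ) : EReal) := by
      refine (iInf₂_le μbar hμbar).trans_eq ?_
      rw [hFm, EReal.coe_add]
    exact ⟨(MY μ₀ F τ μ).toReal, (EReal.coe_toReal (ne_top_of_le_ne_top (EReal.coe_ne_top _) hup)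
      (ne_bot_of_le_ne_bot (EReal.coe_ne_bot _) hlow)).symm⟩
  have hIle : ∀ ρ ∈ Pfin μ₀, ∀ r : ℝ, F ρ ≤ r → I ≤ W2 μ ρ ^ 2 / (2 * τ) + r := by
    intro ρ hρ r hr
    have : (I : EReal) ≤ ((W2 μ ρ ^ 2 / (2 * τ) + r : ℝ) : EReal) := by
      rw [← hI, EReal.coe_add]
      exact (iInf₂_le ρ hρ).trans (by gcongr)
    exact_mod_cast this
  -- this choice of `ε` makes the squared cost between consecutive near-minimizers at most `4⁻ⁿ`
  let ε : ℕ → ℝ := fun n => ((1 / 2) ^ n) ^ 2 / (8 * τ)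
  have hε : ∀ n, 0 < ε n := fun n => by positivity
  have hmin : ∀ n, ∃ ν ∈ Pfin μ₀, ∃ f : ℝ, F ν = f ∧ W2 μ ν ^ 2 / (2 * τ) + f < I + ε n := by
    intro n
    have : MY μ₀ F τ μ < ((I + ε n : ℝ) : EReal) := by
      rw [hI]
      exact_mod_cast lt_add_of_pos_right I (hε n)
    simp only [MY, iInf_lt_iff] at this
    obtain ⟨ν, hν, hlt⟩ := this
    have hbot : F ν ≠ ⊥ := ne_bot_of_le_ne_bot (EReal.coe_ne_bot _) (hm ν hν)
    have htop : F ν ≠ ⊤ := by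
      intro h
      rw [h, EReal.coe_add_top] at hlt
      exact not_top_lt hlt
    refine ⟨ν, hν, (F ν).toReal, (EReal.coe_toReal htop hbot).symm, ?_⟩
    rw [← EReal.coe_toReal htop hbot] at hlt
    exact_mod_cast hlt
  choose ν hν f hf hlt using hmin
  -- the midpoint competes for the infimum `I`, which bounds the cost `D` between its endpoints
  have hpl : ∀ n, ∃ γ : Measure (Euc d × Euc d), γ.map Prod.fst = ν n ∧
      γ.map Prod.snd = ν (n + 1) ∧
      eLpNorm (fun q : Euc d × Euc d => q.1 - q.2) 2 γ ≤ 2⁻¹ ^ n := by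
    intro n
    obtain ⟨P, hP, hPc⟩ := exists_isGenPlan hμ₀ hconv hμ (hν n) (hν (n + 1))
    have hc := hPc (1 / 2) ⟨by norm_num, by norm_num⟩
    have hD0 : 0 ≤ ∫ q, ‖q.2.1 - q.2.2‖ ^ 2 ∂P := integral_nonneg fun q => by positivity
    rw [hf, hf, ← EReal.coe_mul, ← EReal.coe_mul, ← EReal.coe_add, ← EReal.coe_sub] at hc
    have h1 := hIle _ (hP.interp_mem_Pfin hμ (1 / 2)) _ hc
    have h2 := hP.W2_midpoint_le
    have h3 : ε (n + 1) ≤ ε n := by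
      dsimp only [ε]
      gcongr ?_ ^ 2 / _
      exact pow_le_pow_of_le_one (by norm_num) (by norm_num) n.le_succ
    have h4 := hlt n
    have h5 := hlt (n + 1)
    set D := ∫ q, ‖q.2.1 - q.2.2‖ ^ 2 ∂P with hD
    have hDle : D ≤ ((1 / 2) ^ n) ^ 2 := by
      have h6 : W2 μ (P.map (fun q => (1 - 1 / 2 : ℝ) • q.2.1 + (1 / 2 : ℝ) • q.2.2)) ^ 2 / (2 * τ)
          ≤ (1 / 2 * W2 μ (ν n) ^ 2 + 1 / 2 * W2 μ (ν (n + 1)) ^ 2 - 1 / 4 * D) / (2 * τ) := by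
        gcongr
      have h7 : (1 / 2 * W2 μ (ν n) ^ 2 + 1 / 2 * W2 μ (ν (n + 1)) ^ 2 - 1 / 4 * D) / (2 * τ)
        = 1 / 2 * (W2 μ (ν n) ^ 2 / (2 * τ)) + 1 / 2 * (W2 μ (ν (n + 1)) ^ 2 / (2 * τ))
          - D / (8 * τ) := by
        field_simp
        ring
      have h8 : 0 ≤ 1 / 2 * (1 - 1 / 2) * (lam / 2) * D := by
        have : (0:ℝ) ≤ 1 / 2 * (1 - 1 / 2) := by norm_num
        positivity
      have h9 : D / (8 * τ) ≤ ε n := by linarith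
      dsimp only [ε] at h9
      exact (div_le_div_iff_of_pos_right (by positivity)).1 h9
    refine ⟨P.map (fun q => (q.2.1, q.2.2)), ?_, ?_, ?_⟩
    · rw [Measure.map_map (by fun_prop) (by fun_prop), ← hP.law₂]; rfl
    · rw [Measure.map_map (by fun_prop) (by fun_prop), ← hP.law₃]; rfl
    · rw [eLpNorm_map_measure (by fun_prop) (by fun_prop)]
      change eLpNorm (fun q : Euc d × Euc d × Euc d => q.2.1 - q.2.2) 2 P ≤ _
      rw [hD, ← toReal_eLpNorm_sq P (by fun_prop), pow_le_pow_iff_left₀ ENNReal.toReal_nonneg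
        (by positivity) two_ne_zero] at hDle
      rw [← ENNReal.ofReal_toReal hP.memLp₂₃.2.ne]
      refine (ENNReal.ofReal_le_ofReal hDle).trans_eq ?_
      rw [ENNReal.ofReal_pow (by norm_num), one_div, ENNReal.ofReal_inv_of_pos (by norm_num)]
      simp
  choose γ hγ1 hγ2 hγ using hpl
  obtain ⟨ρ, hρp, hρfin, hρlim⟩ := exists_W2_limit ν γ (fun n => (hν n).1) hγ1 hγ2 hγ
  have hρ : ρ ∈ Pfin μ₀ := mem_Pfin_of_W2sq_ne_top (hν 0) hρp (hρfin 0)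
  have hdist : Tendsto (fun n => W2 μ (ν n)) atTop (nhds (W2 μ ρ)) := by
    rw [tendsto_iff_dist_tendsto_zero]
    refine squeeze_zero (fun n => dist_nonneg) (fun n => ?_) hρlim
    have t1 := W2_triangle hμ₀ hconv (hν n) hμ hρ
    have t2 := W2_triangle hμ₀ hconv hρ hμ (hν n)
    rw [W2_comm (ν n) μ] at t1
    rw [W2_comm ρ μ, W2_comm ρ (ν n)] at t2
    rw [Real.dist_eq, abs_le]
    constructor <;> linarith
  have hε0 : Tendsto ε atTop (nhds 0) := by
    have : Tendsto (fun n : ℕ => ((1 / 2 : ℝ)) ^ n) atTop (nhds 0) :=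
      tendsto_pow_atTop_nhds_zero_of_lt_one (by norm_num) (by norm_num)
    simpa [ε] using (this.pow 2).div_const (8 * τ)
  have hg : Tendsto (fun n => I + ε n - W2 μ (ν n) ^ 2 / (2 * τ)) atTop
      (nhds (I - W2 μ ρ ^ 2 / (2 * τ))) := by
    simpa using (hε0.const_add I).sub ((hdist.pow 2).div_const (2 * τ))
  have hFρ : F ρ ≤ ((I - W2 μ ρ ^ 2 / (2 * τ) : ℝ) : EReal) := by
    refine (hlsc ν ρ hν hρ hρlim).trans ?_
    rw [← ((continuous_coe_real_ereal.tendsto _).comp hg).liminf_eq]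
    refine liminf_le_liminf (Eventually.of_forall fun n => ?_)
    rw [hf]
    have := hlt n
    exact EReal.coe_le_coe_iff.2 (by linarith)
  have htop : F ρ ≠ ⊤ := ne_top_of_le_ne_top (EReal.coe_ne_top _) hFρ
  have hbot : F ρ ≠ ⊥ := ne_bot_of_le_ne_bot (EReal.coe_ne_bot _) (hm ρ hρ)
  have hr := EReal.coe_toReal htop hbot
  refine ⟨ρ, hρ, (F ρ).toReal, hr.symm, ?_⟩
  rw [hI]
  congr 1
  refine le_antisymm (hIle ρ hρ _ hr.ge) ?_
  rw [← hr, EReal.coe_le_coe_iff] at hFρ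
  linarith

end

/-- **Generalized convexity of the Moreau–Yosida regularization** (Theorem 1.1).
If `E` is proper, coercive, lower semicontinuous and `λ`-convex along generalized
geodesics with `λ ≥ 0`, attains its minimum at `μ̄`, and `τ > 0`, then with
`λ_τ := λ/(1+λτ)`, for every `μ` in the `W₂`-closure of `D(E)` there is a geodesic
from `μ̄` to `μ` along which `E_τ` is `λ_τ`-convex. -/
theorem moreauYosida_generalized_convexity
    {d : ℕ} (μ₀ : Measure (Euc d)) (hμ₀ : IsProbabilityMeasure μ₀)
    (F : Measure (Euc d) → EReal) (lam : ℝ) (hlam : 0 ≤ lam)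
    (hproper : ProperFn μ₀ F) (hcoer : CoerciveFn μ₀ F) (hlsc : W2LSC μ₀ F)
    (hconv : GenGeoConvex μ₀ lam F)
    (μbar : Measure (Euc d)) (hμbar : μbar ∈ Pfin μ₀)
    (hmin : ∀ ρ ∈ Pfin μ₀, F μbar ≤ F ρ)
    (τ : ℝ) (hτ : 0 < τ)
    (μ : Measure (Euc d)) (hμ : μ ∈ W2Closure μ₀ (Dom μ₀ F)) :
    ∃ γ : Measure (Euc d × Euc d), IsOptimalPlan μbar μ γ ∧
      ∀ α ∈ Set.Icc (0:ℝ) 1,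
        MY μ₀ F τ (γ.map (fun q => (1 - α) • q.1 + α • q.2)) ≤
          ((1 - α : ℝ) : EReal) * MY μ₀ F τ μbar + (α : EReal) * MY μ₀ F τ μ -
            ((α * (1 - α) * ((lam / (1 + lam * τ)) / 2) * (W2 μbar μ) ^ 2 : ℝ) : EReal) := by
  obtain ⟨hbot, ρ₀, hρ₀, hρ₀F⟩ := hproper
  have hmtop : F μbar ≠ ⊤ := ne_top_of_le_ne_top hρ₀F (hmin ρ₀ hρ₀)
  obtain ⟨m, hFm⟩ : ∃ m : ℝ, F μbar = m :=
    ⟨(F μbar).toReal, (EReal.coe_toReal hmtop (hbot _)).symm⟩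
  have hm : ∀ ρ ∈ Pfin μ₀, (m : EReal) ≤ F ρ := fun ρ hρ => hFm ▸ hmin ρ hρ
  have hMYbar : MY μ₀ F τ μbar = m := by
    refine le_antisymm ((iInf₂_le μbar hμbar).trans_eq ?_) (le_iInf₂ fun ρ hρ => ?_)
    · simp [W2_self, hFm]
    · rw [← zero_add (m : EReal)]
      refine add_le_add ?_ (hm ρ hρ)
      exact_mod_cast (by positivity : 0 ≤ W2 μbar ρ ^ 2 / (2 * τ))
  obtain ⟨ν, hν, f, hf, hMY⟩ := exists_proximal hμ₀ hlam hlsc hconv hm hμbar hFm hτ hμ.1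
  -- base point `μ`, so that the reversed `(1,2)`-marginal of the plan is the required geodesic
  obtain ⟨P, hP, hPc⟩ := exists_isGenPlan hμ₀ hconv hμ.1 hμbar hν
  refine ⟨P.map (fun q => (q.2.1, q.1)), ⟨?_, ?_, ?_⟩, fun α hα => ?_⟩
  · rw [Measure.map_map (by fun_prop) (by fun_prop), ← hP.law₂]; rfl
  · rw [Measure.map_map (by fun_prop) (by fun_prop)]; exact hP.law₁
  · have hm12 : Measurable fun q : Euc d × Euc d × Euc d => q.1 - q.2.1 := by fun_prop
    rw [lintegral_map (by fun_prop) (by fun_prop), W2sq_comm,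
      ← ENNReal.toReal_eq_toReal_iff' _ (W2sq_ne_top_of_mem hμ₀ hμ.1 hμbar)]
    · rw [← W2_sq, ← hP.cost₁₂, ← toReal_lintegral_sq_norm P hm12]
      exact congrArg _ (lintegral_congr fun q => by rw [norm_sub_rev])
    · have e : ∀ q : Euc d × Euc d × Euc d, ‖q.2.1 - q.1‖ = ‖q.1 - q.2.1‖ :=
        fun q => norm_sub_rev _ _
      simp only [e]
      exact (lintegral_sq_norm_ne_top_iff P hm12).2 hP.memLp₁₂
  · rw [Measure.map_map (by fun_prop) (by fun_prop)]
    change MY μ₀ F τ (P.map fun q => (1 - α) • q.2.1 + α • q.1) ≤ _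
    refine (iInf₂_le (P.map fun q => (1 - α) • q.2.1 + α • q.2.2)
      (hP.interp_mem_Pfin hμ.1 α)).trans ?_
    have hc := hPc α hα
    -- every quantity is now finite, so that the inequality can be read in `ℝ`
    rw [hf, hFm, ← EReal.coe_mul, ← EReal.coe_mul, ← EReal.coe_add, ← EReal.coe_sub] at hc
    refine (add_le_add le_rfl hc).trans ?_
    rw [hMYbar, hMY, ← EReal.coe_mul, ← EReal.coe_mul, ← EReal.coe_add, ← EReal.coe_add,
      ← EReal.coe_sub, EReal.coe_le_coe_iff]
    have h1 := hP.W2_interp_le α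
    have h2 := hP.interpolation_ineq hlam hτ
    rw [W2_comm μbar μ]
    set D := ∫ q, ‖q.2.1 - q.2.2‖ ^ 2 ∂P
    have h3 : W2 (P.map (fun q => (1 - α) • q.2.1 + α • q.1))
      (P.map (fun q => (1 - α) • q.2.1 + α • q.2.2)) ^ 2 / (2 * τ)
        ≤ α ^ 2 * W2 μ ν ^ 2 / (2 * τ) := by gcongr
    have h4 : 0 ≤ α * (1 - α) / 2 := by
      have := hα.1
      have := sub_nonneg.2 hα.2
      positivity
    have h5 := mul_le_mul_of_nonneg_left h2 h4
    have h6 : α ^ 2 * W2 μ ν ^ 2 / (2 * τ)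
      = α * (W2 μ ν ^ 2 / (2 * τ)) - α * (1 - α) / 2 * (1 / τ * W2 μ ν ^ 2) := by
      field_simp
      ring
    linarith
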